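/- arXiv:2303.18008 — 4 statements merged into one kernel-verified Lean document; each statement's English description precedes it below -/
import Mathlib

section
/- For the transformed trapdoor channel with the two-node Q-graph, test distribution T, and value function h: for each mixed state s̃ ∈ {(0,1),(1,0)}, each node q ∈ {1,2}, and every input x̃ ∈ {0,1}, one has D(W(·|x̃,s̃) ‖ T(·|q)) + Σ_{ỹ∈{0,1}} W(ỹ|x̃,s̃)·h(f̃(s̃,x̃,ỹ), φ(q,ỹ)) = log₂(3/2). Consequently, since h(s̃,q) = 0 at these states, the Bellman equation log₂(3/2) + h(s̃,q) = max_{x̃∈{0,1}} [ D(W(·|x̃,s̃) ‖ T(·|q)) + Σ_{ỹ} W(ỹ|x̃,s̃)·h(f̃(s̃,x̃,ỹ), φ(q,ỹ)) ] holds at all four such MDP states. -/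
/-!
At a mixed state the output is uniform, and `T(0|q) T(1|q) = 2/9` at both nodes, so the relative
entropy is `-½ log₂(4 · 2/9) = log₂(3/2) - ½` whatever the node. After output `y` the next MDP state
is `((1 ⊕ y, x), y)`, where `h` equals `1` exactly when `y = 1 ⊕ x`; so for every input `x` exactly
one of the two equiprobable outputs earns value `1`, and the expected value `½` cancels the `-½`.
-/

open Real

noncomputable section

namespace TrapdoorDelayed

/-- Output kernel of the transformed trapdoor channel (trapdoor channel with
feedback delayed by two time instances): `W x s y` is the probability of
output `y` given current input `x` and state `s = (s₀, x')`.  It does not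
depend on the current input: if `s₀ = x'` the output is `s₀` with probability
one; otherwise the output is `0` or `1` with probability `1/2` each. -/
def W (_x : Bool) (s : Bool × Bool) (y : Bool) : ℝ :=
  if s.1 = s.2 then (if y = s.1 then 1 else 0) else 1 / 2

/-- State update `f̃((s₀,x'), x̃, ỹ) = (s₀ ⊕ x' ⊕ ỹ, x̃)`. -/
def ftil (s : Bool × Bool) (x y : Bool) : Bool × Bool :=
  (Bool.xor (Bool.xor s.1 s.2) y, x)

/-- Two-node Q-graph node update `φ(q, ỹ) = ỹ + 1`: the node records the last
output (`false` = node 1, `true` = node 2). -/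
def phi (_q y : Bool) : Bool := y

/-- Graph-based test distribution: `T q y = T(ỹ = y | q)`, with
`T(0|1) = 2/3`, `T(1|1) = 1/3`, `T(0|2) = 1/3`, `T(1|2) = 2/3`. -/
def T (q y : Bool) : ℝ := if q = y then 2 / 3 else 1 / 3

/-- Value function: `h((0,0), node 2) = h((1,1), node 1) = 1`, else `0`. -/
def h (s : Bool × Bool) (q : Bool) : ℝ :=
  if (s = (false, false) ∧ q = true) ∨ (s = (true, true) ∧ q = false) then 1 else 0

/-- Binary relative entropy in bits, `D(P‖Q) = Σ_y P(y)·log₂(P(y)/Q(y))`; the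
convention `0·log 0 = 0` holds automatically since `Real.logb 2 0 = 0`. -/
def D (P Q : Bool → ℝ) : ℝ := ∑ y : Bool, P y * logb 2 (P y / Q y)

/-- Right-hand side of the Bellman equation for action `x` at MDP state `(s,q)`:
`D(W(·|x,s) ‖ T(·|q)) + Σ_ỹ W(ỹ|x,s)·h(f̃(s,x,ỹ), φ(q,ỹ))`. -/
def rhs (s : Bool × Bool) (q : Bool) (x : Bool) : ℝ :=
  D (W x s) (T q) + ∑ y : Bool, W x s y * h (ftil s x y) (phi q y)

lemma D_uniform {Q : Bool → ℝ} (hQ : ∀ y, Q y ≠ 0) :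
    D (fun _ => 1 / 2) Q = -(logb 2 (4 * (Q false * Q true)) / 2) := by
  have hprod : 1 / 2 / Q true * (1 / 2 / Q false) = (4 * (Q false * Q true))⁻¹ := by
    field_simp [hQ]
    norm_num
  have hdiv (y : Bool) : 1 / 2 / Q y ≠ 0 := div_ne_zero (by norm_num) (hQ y)
  calc
    D (fun _ => 1 / 2) Q = (logb 2 (1 / 2 / Q true) + logb 2 (1 / 2 / Q false)) / 2 := by
      simp only [D, Fintype.sum_bool]
      ring
    _ = -(logb 2 (4 * (Q false * Q true)) / 2) := by
      rw [← logb_mul (hdiv true) (hdiv false), hprod, logb_inv, neg_div]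

lemma T_ne_zero (q y : Bool) : T q y ≠ 0 := by
  unfold T
  split_ifs <;> norm_num

lemma T_false_mul_T_true (q : Bool) : T q false * T q true = 2 / 9 := by
  cases q <;> norm_num [T]

lemma D_uniform_T (q : Bool) : D (fun _ => 1 / 2) (T q) = logb 2 (3 / 2) - 1 / 2 := by
  have hlog : logb 2 (4 * (2 / 9)) = 1 - 2 * logb 2 (3 / 2) := by
    rw [show (4 * (2 / 9) : ℝ) = 2 / (3 / 2) ^ 2 by norm_num,
      logb_div (by norm_num) (by norm_num), logb_self_eq_one (by norm_num), logb_pow,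
      Nat.cast_ofNat]
  rw [D_uniform (T_ne_zero q), T_false_mul_T_true, hlog]
  ring

lemma h_eq_ite (s : Bool × Bool) (q : Bool) :
    h s q = if s.1 = s.2 ∧ q ≠ s.1 then 1 else 0 := by
  obtain ⟨a, b⟩ := s
  cases a <;> cases b <;> simp [h]

section MixedState

variable {s : Bool × Bool}

lemma W_of_ne (hs : s.1 ≠ s.2) (x : Bool) : W x s = fun _ => 1 / 2 :=
  funext fun _ => if_neg hs

lemma ftil_of_ne (hs : s.1 ≠ s.2) (x y : Bool) : ftil s x y = (!y, x) := by
  rw [ftil, Bool.xor_iff_ne.mpr hs, Bool.true_xor]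

lemma h_of_ne (hs : s.1 ≠ s.2) (q : Bool) : h s q = 0 := by
  rw [h_eq_ite, if_neg fun hsq => hs hsq.1]

lemma h_ftil_phi_of_ne (hs : s.1 ≠ s.2) (q x y : Bool) :
    h (ftil s x y) (phi q y) = if y = !x then 1 else 0 := by
  rw [ftil_of_ne hs, phi, h_eq_ite]
  cases x <;> cases y <;> rfl

lemma sum_W_mul_h_of_ne (hs : s.1 ≠ s.2) (q x : Bool) :
    ∑ y : Bool, W x s y * h (ftil s x y) (phi q y) = 1 / 2 := by
  simp only [W_of_ne hs, h_ftil_phi_of_ne hs, mul_ite, mul_one, mul_zero, Finset.sum_ite_eq',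
    Finset.mem_univ, if_true]

lemma rhs_of_ne (hs : s.1 ≠ s.2) (q x : Bool) : rhs s q x = logb 2 (3 / 2) := by
  rw [rhs, sum_W_mul_h_of_ne hs, W_of_ne hs, D_uniform_T, sub_add_cancel]

end MixedState

/-- at each mixed state `s̃ ∈ {(0,1),(1,0)}` and each node `q`,
every action gives value `log₂(3/2)`; since `h(s̃,q) = 0` there, the Bellman
equation holds at all four such MDP states. -/
theorem bellman_at_mixed_states :
    (∀ s ∈ ({(false, true), (true, false)} : Set (Bool × Bool)), ∀ q x : Bool,
      rhs s q x = logb 2 (3 / 2)) ∧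
    (∀ s ∈ ({(false, true), (true, false)} : Set (Bool × Bool)), ∀ q : Bool,
      h s q = 0) ∧
    (∀ s ∈ ({(false, true), (true, false)} : Set (Bool × Bool)), ∀ q : Bool,
      logb 2 (3 / 2) + h s q = max (rhs s q false) (rhs s q true)) := by
  have hne : ∀ s ∈ ({(false, true), (true, false)} : Set (Bool × Bool)), s.1 ≠ s.2 := by
    rintro s (rfl | rfl) <;> decide
  refine ⟨fun s hs => rhs_of_ne (hne s hs), fun s hs => h_of_ne (hne s hs), fun s hs q => ?_⟩
  rw [h_of_ne (hne s hs), rhs_of_ne (hne s hs), rhs_of_ne (hne s hs), max_self, add_zero]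

end TrapdoorDelayed
end
end

section
/- For every p ∈ (0,1) and every (a,b,c,d) ∈ (0,1)⁴, the following identity holds for the transformed input-constrained BSC(p): ρ* + h((0,0),1) = D([p̄,p] ‖ [a,ā]) + p̄·h((0,0),1) + p·h((0,0),2), where ρ* = log₂( p^p·p̄^{p̄}·a^{p³−3p²+3p−1}·(b̄c̄d)^{p³−p²} / ( (ābc)^{p³−2p²+p}·d̄^{p³} ) ), h((0,0),1) = log₂( c̄^p·d·d̄^p·c^{1−2p} / (ā^{2p}·b^p·a^{2−3p}) · (ābcd̄/(ab̄c̄d))^{p²} ), and h((0,0),2) = log₂( (d/b)·(bd̄/(b̄d))^p ). -/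
/-!
As long as the input is `0`, the state stays `(0,0)`, so the outputs are i.i.d. with law `[p̄, p]`
and the node of the Q-graph is a Markov chain with one-step reward `D_q = D([p̄,p] ‖ T(·|q))`.
The node is determined by the last two outputs, hence two steps suffice to forget the starting node.
For such a chain, with transition operator `P`, the function `P²D` is a constant, the average
reward, and `D + PD`, normalized to vanish at a chosen node, is the relative value:
`P²D + (D + PD) = D + P(D + PD)`. Expanding the logarithms shows that `ρ*` is exactly this average
reward and that `h((0,0),·)` is exactly this relative value, normalized at node 4.
-/

open Real

noncomputable section

namespace BSCDelayed

/-!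
The transformed (1,∞)-RLL input-constrained BSC(p): the binary symmetric
channel with crossover probability `p`, inputs forbidden to contain two
consecutive ones, with feedback delayed by two time instances, viewed as a
unifilar FSC with instantaneous feedback.  The state is `s̃ = (x'', x')`, the
two previous inputs; output `ỹ` depends only on `x'`.  Throughout, `ū = 1 - u`
and real powers `u ^ v` are `Real.rpow`.
-/

/-- `PY p s y` = probability that the output is `y` at state `s = (x'',x')`:
`ỹ = x'` with probability `1 - p`. -/
def PY (p : ℝ) (s : Bool × Bool) (y : Bool) : ℝ := if s.2 = y then 1 - p else p

/-- State update `f̃((x'',x'), x̃, ỹ) = (x', x̃)`. -/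
def fB (s : Bool × Bool) (x : Bool) (_y : Bool) : Bool × Bool := (s.2, x)

/-- Four-node Q-graph node update (nodes 1,2,3,4 are indices 0,1,2,3):
`φ(q,0) = 1` for `q ∈ {1,3}`, `φ(q,0) = 3` for `q ∈ {2,4}`,
`φ(q,1) = 2` for `q ∈ {1,3}`, `φ(q,1) = 4` for `q ∈ {2,4}`. -/
def phi4 (q : Fin 4) (y : Bool) : Fin 4 :=
  if q.val % 2 = 0 then (if y then 1 else 0) else (if y then 3 else 2)

/-- Graph-based test distribution: `T(0|q) = a, b, c, d` for nodes `q = 1,2,3,4`. -/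
def TB (a b c d : ℝ) : Fin 4 → ℝ := ![a, b, c, d]

/-- Binary relative entropy `D([u,1−u]‖[v,1−v]) = u·log₂(u/v) + ū·log₂(ū/v̄)`. -/
def Dbin (u v : ℝ) : ℝ := u * logb 2 (u / v) + (1 - u) * logb 2 ((1 - u) / (1 - v))

/-- The recurring ratio `ābcd̄/(ab̄c̄d)`. -/
def ratio (a b c d : ℝ) : ℝ := ((1 - a) * b * c * (1 - d)) / (a * (1 - b) * (1 - c) * d)

/-- `ρ* = log₂( p^p·p̄^p̄·a^{p³−3p²+3p−1}·(b̄c̄d)^{p³−p²} / ((ābc)^{p³−2p²+p}·d̄^{p³}) )`. -/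
def rhoStar (p a b c d : ℝ) : ℝ :=
  logb 2 ((p ^ p * (1 - p) ^ (1 - p) * a ^ (p^3 - 3*p^2 + 3*p - 1) *
      ((1 - b) * (1 - c) * d) ^ (p^3 - p^2)) /
    (((1 - a) * b * c) ^ (p^3 - 2*p^2 + p) * (1 - d) ^ (p^3)))

/-- `h((0,0),1) = h((1,0),1)`. -/
def h001 (p a b c d : ℝ) : ℝ :=
  logb 2 (((1 - c) ^ p * d * (1 - d) ^ p * c ^ (1 - 2*p)) /
      ((1 - a) ^ (2*p) * b ^ p * a ^ (2 - 3*p)) * ratio a b c d ^ (p^2))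

/-- `h((0,0),2) = h((1,0),2)`. -/
def h002 (p a b c d : ℝ) : ℝ :=
  logb 2 ((d / b) * ((b * (1 - d)) / ((1 - b) * d)) ^ p)

/-- `h((0,0),3) = h((1,0),3)`. -/
def h003 (p a b c d : ℝ) : ℝ :=
  logb 2 ((a ^ (2*p - 1) * d * (1 - d) ^ p) / ((1 - a) * b * c) ^ p *
    ratio a b c d ^ (p^2))

/-- `h((0,1),1)`. -/
def h011 (p a b c d : ℝ) : ℝ :=
  logb 2 ((a ^ (6*p^2 - 6*p + 1) * (1 - b) ^ (2*p^2 - p) * (1 - c) ^ (2*p^2) *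
      d ^ (2*p^2 - p + 1) * (1 - d) ^ p) /
    ((1 - a) ^ (4*p^2 - 2*p + 1) * b ^ (4*p^2 - 3*p + 1) * c ^ (4*p^2 - 2*p)) *
    ratio a b c d ^ (2*p^3))

/-- `h((0,1),2)`. -/
def h012 (p a b c d : ℝ) : ℝ :=
  logb 2 ((a ^ (5*p^2 - 4*p + 1) * ((1 - a) * c * d) ^ p *
      ((1 - b) * (1 - c) * d * (1 - d)) ^ (p^2)) /
    ((1 - b) ^ (1 - p) * ((1 - a) * b * c) ^ (3*p^2)) *
    ratio a b c d ^ (2*p^3))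

/-- `h((0,1),3)`. -/
def h013 (p a b c d : ℝ) : ℝ :=
  logb 2 ((a ^ (6*p^2 - 5*p + 1) * (1 - b) ^ (2*p^2 - p) * (1 - c) ^ (2*p^2 + p - 1) *
      d ^ (2*p^2 - p + 1) * (1 - d) ^ p) /
    ((1 - a) ^ (4*p^2 - p) * b ^ (4*p^2 - 3*p + 1) * c ^ (4*p^2 - p)) *
    ratio a b c d ^ (2*p^3))

/-- `h((0,1),4)`. -/
def h014 (p a b c d : ℝ) : ℝ :=
  logb 2 ((a ^ (5*p^2 - 4*p + 1) * ((1 - b) * (1 - c) * d * (1 - d)) ^ (p^2)) /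
    (((1 - a) * b * c) ^ (3*p^2 - p) * (1 - d) ^ (1 - p)) *
    ratio a b c d ^ (2*p^3))

/-- The value function `h(s̃, q)` (the pair `s̃ = (1,1)` never occurs and is
assigned the value 0). -/
def hB (p a b c d : ℝ) (s : Bool × Bool) (q : Fin 4) : ℝ :=
  match s with
  | (false, false) => ![h001 p a b c d, h002 p a b c d, h003 p a b c d, 0] q
  | (true, false) => ![h001 p a b c d, h002 p a b c d, h003 p a b c d, 0] q
  | (false, true) => ![h011 p a b c d, h012 p a b c d, h013 p a b c d, h014 p a b c d] q
  | (true, true) => 0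

/-- Right-hand side of the Bellman equation for action `x` at MDP state `(s,q)`:
`D(P_Ỹ(·|s) ‖ T(·|q)) + Σ_ỹ P_Ỹ(ỹ|s)·h(f̃(s,x,ỹ), φ(q,ỹ))`. -/
def rhsB (p a b c d : ℝ) (s : Bool × Bool) (q : Fin 4) (x : Bool) : ℝ :=
  Dbin (PY p s false) (TB a b c d q) +
    ∑ y : Bool, PY p s y * hB p a b c d (fB s x y) (phi4 q y)

/-- First constraint of Theorem 8 (Eq. (15) in the paper). -/
def cons1 (p a b c d : ℝ) : Prop :=
  1 ≤ (a ^ (4*p^3 - 12*p^2 + 11*p - 3) * ((1 - b) * d) ^ (4*p^3 - 6*p^2 + 2*p) *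
      (1 - c) ^ (4*p^3 - 4*p^2 + p)) /
    (((1 - a) * c) ^ (4*p^3 - 8*p^2 + 5*p - 1) * b ^ (4*p^3 - 10*p^2 + 6*p - 1) *
      (1 - d) ^ (4*p^3 - 2*p^2))

/-- Second constraint of Theorem 8. -/
def cons2 (p a b c d : ℝ) : Prop :=
  1 ≤ (a ^ (4*p^3 - 10*p^2 + 8*p - 2) * ((1 - b) * d) ^ (4*p^3 - 4*p^2 + p) *
      (1 - c) ^ (4*p^3 - 2*p^2 - 2*p + 1)) /
    (((1 - a) * c) ^ (4*p^3 - 6*p^2 + 2*p) * b ^ (4*p^3 - 8*p^2 + 5*p - 1) *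
      (1 - d) ^ (4*p^3 - p))

section TransitionOperator

variable {Q Y R : Type*} [Fintype Y] [Ring R] {w : Y → R} {φ : Q → Y → Q}

/-- The transition operator of the node process: the mean of `f` at the successor of node `q`, when
outputs have law `w` and the node is updated by `φ`. -/
def nextMean (w : Y → R) (φ : Q → Y → Q) (f : Q → R) (q : Q) : R :=
  ∑ y, w y * f (φ q y)

theorem nextMean_add (f g : Q → R) (q : Q) :
    nextMean w φ (fun q' => f q' + g q') q = nextMean w φ f q + nextMean w φ g q := by
  simp only [nextMean, mul_add, Finset.sum_add_distrib]

theorem nextMean_sub_const (hw : ∑ y, w y = 1) (f : Q → R) (k : R) (q : Q) :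
    nextMean w φ (fun q' => f q' - k) q = nextMean w φ f q - k := by
  simp only [nextMean, mul_sub, Finset.sum_sub_distrib, ← Finset.sum_mul, hw, one_mul]

theorem nextMean_nextMean_eq_of_update_update_eq
    (hφ : ∀ q q' y y', φ (φ q y) y' = φ (φ q' y) y') (f : Q → R) (q q' : Q) :
    nextMean w φ (nextMean w φ f) q = nextMean w φ (nextMean w φ f) q' := by
  simp only [nextMean, hφ q q']

/-- The relative value of node `q` for the one-step reward `r`, normalized to vanish at `q₀`. It
compares the rewards of the first two steps only, so it is the right notion for node processes that
forget their starting point after two steps. -/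
def relativeValue (w : Y → R) (φ : Q → Y → Q) (r : Q → R) (q₀ q : Q) : R :=
  r q + nextMean w φ r q - (r q₀ + nextMean w φ r q₀)

theorem poisson_equation_of_update_update_eq (hw : ∑ y, w y = 1)
    (hφ : ∀ q q' y y', φ (φ q y) y' = φ (φ q' y) y') (r : Q → R) (q₀ q : Q) :
    nextMean w φ (nextMean w φ r) q₀ + relativeValue w φ r q₀ q =
      r q + nextMean w φ (relativeValue w φ r q₀) q := by
  have next_relativeValue : nextMean w φ (relativeValue w φ r q₀) q =
      nextMean w φ r q + nextMean w φ (nextMean w φ r) q - (r q₀ + nextMean w φ r q₀) :=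
    (nextMean_sub_const hw _ _ q).trans (by rw [nextMean_add])
  rw [next_relativeValue, nextMean_nextMean_eq_of_update_update_eq hφ r q q₀, relativeValue]
  abel

end TransitionOperator

section RelativeEntropy

theorem mul_logb_div (β x : ℝ) {y : ℝ} (hy : y ≠ 0) :
    x * logb β (x / y) = x * (logb β x - logb β y) := by
  rcases eq_or_ne x 0 with rfl | hx
  · simp only [zero_mul]
  · rw [logb_div hx hy]

theorem Dbin_eq_sub (u : ℝ) {v : ℝ} (hv : v ∈ Set.Ioo (0 : ℝ) 1) :
    Dbin u v = (u * logb 2 u + (1 - u) * logb 2 (1 - u)) -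
      (u * logb 2 v + (1 - u) * logb 2 (1 - v)) := by
  rw [Dbin, mul_logb_div 2 u hv.1.ne', mul_logb_div 2 (1 - u) (sub_pos.2 hv.2).ne']
  ring

variable {p a b c d : ℝ}

theorem rhoStar_eq_Dbin (hp : p ∈ Set.Ioo (0 : ℝ) 1) (ha : a ∈ Set.Ioo (0 : ℝ) 1)
    (hb : b ∈ Set.Ioo (0 : ℝ) 1) (hc : c ∈ Set.Ioo (0 : ℝ) 1) (hd : d ∈ Set.Ioo (0 : ℝ) 1) :
    rhoStar p a b c d =
      (1 - p) * ((1 - p) * Dbin (1 - p) a + p * Dbin (1 - p) b) +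
        p * ((1 - p) * Dbin (1 - p) c + p * Dbin (1 - p) d) := by
  rw [Dbin_eq_sub _ ha, Dbin_eq_sub _ hb, Dbin_eq_sub _ hc, Dbin_eq_sub _ hd, sub_sub_cancel,
    rhoStar]
  rcases hp, ha, hb, hc, hd with ⟨⟨hp, hp'⟩, ⟨ha, ha'⟩, ⟨hb, hb'⟩, ⟨hc, hc'⟩, ⟨hd, hd'⟩⟩
  rw [← sub_pos] at hp' ha' hb' hc' hd'
  simp (disch := positivity) only [logb_mul, logb_div, logb_rpow_eq_mul_logb_of_pos]
  ring

theorem h001_eq_Dbin (p : ℝ) (ha : a ∈ Set.Ioo (0 : ℝ) 1) (hb : b ∈ Set.Ioo (0 : ℝ) 1)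
    (hc : c ∈ Set.Ioo (0 : ℝ) 1) (hd : d ∈ Set.Ioo (0 : ℝ) 1) :
    h001 p a b c d =
      Dbin (1 - p) a + ((1 - p) * Dbin (1 - p) a + p * Dbin (1 - p) b) -
        (Dbin (1 - p) d + ((1 - p) * Dbin (1 - p) c + p * Dbin (1 - p) d)) := by
  rw [Dbin_eq_sub _ ha, Dbin_eq_sub _ hb, Dbin_eq_sub _ hc, Dbin_eq_sub _ hd, h001, ratio]
  rcases ha, hb, hc, hd with ⟨⟨ha, ha'⟩, ⟨hb, hb'⟩, ⟨hc, hc'⟩, ⟨hd, hd'⟩⟩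
  rw [← sub_pos] at ha' hb' hc' hd'
  simp (disch := positivity) only [logb_mul, logb_div, logb_rpow_eq_mul_logb_of_pos]
  ring

theorem h002_eq_Dbin_sub_Dbin (p a c : ℝ) (hb : b ∈ Set.Ioo (0 : ℝ) 1)
    (hd : d ∈ Set.Ioo (0 : ℝ) 1) :
    h002 p a b c d = Dbin (1 - p) b - Dbin (1 - p) d := by
  rw [Dbin_eq_sub _ hb, Dbin_eq_sub _ hd, h002]
  rcases hb, hd with ⟨⟨hb, hb'⟩, ⟨hd, hd'⟩⟩
  rw [← sub_pos] at hb' hd'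
  simp (disch := positivity) only [logb_mul, logb_div, logb_rpow_eq_mul_logb_of_pos]
  ring

theorem h003_eq_Dbin (p : ℝ) (ha : a ∈ Set.Ioo (0 : ℝ) 1) (hb : b ∈ Set.Ioo (0 : ℝ) 1)
    (hc : c ∈ Set.Ioo (0 : ℝ) 1) (hd : d ∈ Set.Ioo (0 : ℝ) 1) :
    h003 p a b c d =
      Dbin (1 - p) c + ((1 - p) * Dbin (1 - p) a + p * Dbin (1 - p) b) -
        (Dbin (1 - p) d + ((1 - p) * Dbin (1 - p) c + p * Dbin (1 - p) d)) := by
  rw [Dbin_eq_sub _ ha, Dbin_eq_sub _ hb, Dbin_eq_sub _ hc, Dbin_eq_sub _ hd, h003, ratio]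
  rcases ha, hb, hc, hd with ⟨⟨ha, ha'⟩, ⟨hb, hb'⟩, ⟨hc, hc'⟩, ⟨hd, hd'⟩⟩
  rw [← sub_pos] at ha' hb' hc' hd'
  simp (disch := positivity) only [logb_mul, logb_div, logb_rpow_eq_mul_logb_of_pos]
  ring

end RelativeEntropy

section NodeProcess

theorem sum_PY (p : ℝ) (s : Bool × Bool) : ∑ y, PY p s y = 1 := by
  rcases s with ⟨x'', _ | _⟩ <;> simp [PY]

theorem phi4_phi4_eq (q q' : Fin 4) (y y' : Bool) :
    phi4 (phi4 q y) y' = phi4 (phi4 q' y) y' := by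
  decide +revert

theorem nextMean_PY_state00 (p : ℝ) (f : Fin 4 → ℝ) (q : Fin 4) :
    nextMean (PY p (false, false)) phi4 f q =
      (1 - p) * f (phi4 q false) + p * f (phi4 q true) := by
  simp [nextMean, PY, add_comm]

/-- The one-step reward `D([p̄,p] ‖ T(·|q))` at state `(0,0)`, as a function of the node `q`. -/
def reward00 (p a b c d : ℝ) (q : Fin 4) : ℝ :=
  Dbin (1 - p) (TB a b c d q)

variable {p a b c d : ℝ}

theorem rhoStar_eq_nextMean_nextMean_reward00 (hp : p ∈ Set.Ioo (0 : ℝ) 1)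
    (ha : a ∈ Set.Ioo (0 : ℝ) 1) (hb : b ∈ Set.Ioo (0 : ℝ) 1) (hc : c ∈ Set.Ioo (0 : ℝ) 1)
    (hd : d ∈ Set.Ioo (0 : ℝ) 1) :
    rhoStar p a b c d = nextMean (PY p (false, false)) phi4
      (nextMean (PY p (false, false)) phi4 (reward00 p a b c d)) 3 := by
  simp only [nextMean_PY_state00]
  exact rhoStar_eq_Dbin hp ha hb hc hd

theorem hB_state00_eq_relativeValue (p : ℝ) (ha : a ∈ Set.Ioo (0 : ℝ) 1)
    (hb : b ∈ Set.Ioo (0 : ℝ) 1) (hc : c ∈ Set.Ioo (0 : ℝ) 1) (hd : d ∈ Set.Ioo (0 : ℝ) 1) :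
    hB p a b c d (false, false) =
      relativeValue (PY p (false, false)) phi4 (reward00 p a b c d) 3 := by
  funext q
  simp only [relativeValue, nextMean_PY_state00]
  fin_cases q
  · exact h001_eq_Dbin p ha hb hc hd
  -- Nodes 2 and 4 have the same successors, so only the immediate rewards differ.
  · exact (h002_eq_Dbin_sub_Dbin p a c hb hd).trans (add_sub_add_right_eq_sub _ _ _).symm
  · exact h003_eq_Dbin p ha hb hc hd
  · exact (sub_self _).symm

theorem rhsB_state00_false (p a b c d : ℝ) (q : Fin 4) :
    rhsB p a b c d (false, false) q false = reward00 p a b c d q +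
      nextMean (PY p (false, false)) phi4 (hB p a b c d (false, false)) q :=
  rfl

theorem bellman_identity_state00_node1_general (hp : p ∈ Set.Ioo (0 : ℝ) 1)
    (ha : a ∈ Set.Ioo (0 : ℝ) 1) (hb : b ∈ Set.Ioo (0 : ℝ) 1) (hc : c ∈ Set.Ioo (0 : ℝ) 1)
    (hd : d ∈ Set.Ioo (0 : ℝ) 1) (q : Fin 4) :
    rhoStar p a b c d + hB p a b c d (false, false) q =
      rhsB p a b c d (false, false) q false := by
  rw [rhsB_state00_false, rhoStar_eq_nextMean_nextMean_reward00 hp ha hb hc hd,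
    hB_state00_eq_relativeValue p ha hb hc hd]
  exact poisson_equation_of_update_update_eq (sum_PY p _) phi4_phi4_eq (reward00 p a b c d) 3 q

end NodeProcess

/-- for every `p ∈ (0,1)` and `(a,b,c,d) ∈ (0,1)⁴`,
`ρ* + h((0,0),1) = D([p̄,p]‖[a,ā]) + p̄·h((0,0),1) + p·h((0,0),2)`. -/
theorem bellman_identity_state00_node1 :
    ∀ p a b c d : ℝ, p ∈ Set.Ioo (0:ℝ) 1 → a ∈ Set.Ioo (0:ℝ) 1 →
      b ∈ Set.Ioo (0:ℝ) 1 → c ∈ Set.Ioo (0:ℝ) 1 → d ∈ Set.Ioo (0:ℝ) 1 →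
      rhoStar p a b c d + h001 p a b c d =
        Dbin (1 - p) a + (1 - p) * h001 p a b c d + p * h002 p a b c d := by
  intro p a b c d hp ha hb hc hd
  have bellman := bellman_identity_state00_node1_general hp ha hb hc hd 0
  rw [rhsB_state00_false, nextMean_PY_state00, ← add_assoc] at bellman
  exact bellman

end BSCDelayed
end
end

section
/- Let p ∈ (0,1) and (a,b,c,d) ∈ (0,1)⁴ satisfy the two constraints: 1 ≤ a^{4p³−12p²+11p−3}·(b̄d)^{4p³−6p²+2p}·c̄^{4p³−4p²+p} / ( (āc)^{4p³−8p²+5p−1}·b^{4p³−10p²+6p−1}·d̄^{4p³−2p²} ) and 1 ≤ a^{4p³−10p²+8p−2}·(b̄d)^{4p³−4p²+p}·c̄^{4p³−2p²−2p+1} / ( (āc)^{4p³−6p²+2p}·b^{4p³−8p²+5p−1}·d̄^{4p³−p} ). Then, at the MDP state ((0,0),1) of the transformed input-constrained BSC(p), the action x̃ = 0 attains the maximum in the Bellman equation; equivalently, p̄·h((0,0),1) + p·h((0,0),2) ≥ p̄·h((0,1),1) + p·h((0,1),2), where h((0,0),1) = log₂( c̄^p·d·d̄^p·c^{1−2p}/(ā^{2p}·b^p·a^{2−3p})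 · (ābcd̄/(ab̄c̄d))^{p²} ), h((0,0),2) = log₂( (d/b)·(bd̄/(b̄d))^p ), h((0,1),1) = log₂( a^{6p²−6p+1}·b̄^{2p²−p}·c̄^{2p²}·d^{2p²−p+1}·d̄^p / (ā^{4p²−2p+1}·b^{4p²−3p+1}·c^{4p²−2p}) · (ābcd̄/(ab̄c̄d))^{2p³} ), and h((0,1),2) = log₂( a^{5p²−4p+1}·(ācd)^p·(b̄c̄dd̄)^{p²} / (b̄^{1−p}·(ābc)^{3p²}) · (ābcd̄/(ab̄c̄d))^{2p³} ). -/
/-!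
Taking `log₂` turns every value `h(s̃, q)` into a linear combination of the eight numbers
`log₂ a`, `log₂ ā`, …, `log₂ d`, `log₂ d̄`, with coefficients polynomial in `p`. Comparing
coefficients, the gain in continuation value of the action `0` over the action `1` is exactly
`log₂` of the right-hand side of the first constraint, so it is nonnegative precisely when that
constraint holds.
-/

open Real

noncomputable section

namespace BSCDelayed

lemma pos_and_one_sub_pos {u : ℝ} (hu : u ∈ Set.Ioo 0 1) : 0 < u ∧ 0 < 1 - u :=
  ⟨hu.1, sub_pos.2 hu.2⟩

section

variable {a b c d : ℝ}

lemma ratio_pos (ha : a ∈ Set.Ioo 0 1) (hb : b ∈ Set.Ioo 0 1) (hc : c ∈ Set.Ioo 0 1)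
    (hd : d ∈ Set.Ioo 0 1) : 0 < ratio a b c d := by
  obtain ⟨ha₀, ha₁⟩ := pos_and_one_sub_pos ha
  obtain ⟨hb₀, hb₁⟩ := pos_and_one_sub_pos hb
  obtain ⟨hc₀, hc₁⟩ := pos_and_one_sub_pos hc
  obtain ⟨hd₀, hd₁⟩ := pos_and_one_sub_pos hd
  unfold ratio
  positivity

lemma logb_ratio (β : ℝ) (ha : a ∈ Set.Ioo 0 1) (hb : b ∈ Set.Ioo 0 1)
    (hc : c ∈ Set.Ioo 0 1) (hd : d ∈ Set.Ioo 0 1) :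
    logb β (ratio a b c d) =
      logb β (1 - a) + logb β b + logb β c + logb β (1 - d) -
        (logb β a + logb β (1 - b) + logb β (1 - c) + logb β d) := by
  obtain ⟨ha₀, ha₁⟩ := pos_and_one_sub_pos ha
  obtain ⟨hb₀, hb₁⟩ := pos_and_one_sub_pos hb
  obtain ⟨hc₀, hc₁⟩ := pos_and_one_sub_pos hc
  obtain ⟨hd₀, hd₁⟩ := pos_and_one_sub_pos hd
  simp (disch := positivity) only [ratio, logb_mul, logb_div]

lemma h001_eq_linear_logb (p : ℝ) (ha : a ∈ Set.Ioo 0 1) (hb : b ∈ Set.Ioo 0 1)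
    (hc : c ∈ Set.Ioo 0 1) (hd : d ∈ Set.Ioo 0 1) :
    h001 p a b c d =
      (-p^2 + 3*p - 2) * logb 2 a + (p^2 - 2*p) * logb 2 (1 - a) +
      (p^2 - p) * logb 2 b - p^2 * logb 2 (1 - b) +
      (p^2 - 2*p + 1) * logb 2 c + (-p^2 + p) * logb 2 (1 - c) +
      (-p^2 + 1) * logb 2 d + (p^2 + p) * logb 2 (1 - d) := by
  obtain ⟨ha₀, ha₁⟩ := pos_and_one_sub_pos ha
  have hb₀ := hb.1
  obtain ⟨hc₀, hc₁⟩ := pos_and_one_sub_pos hc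
  obtain ⟨hd₀, hd₁⟩ := pos_and_one_sub_pos hd
  have hr := ratio_pos ha hb hc hd
  simp (disch := positivity) only [h001, logb_mul, logb_div, logb_rpow_eq_mul_logb_of_pos,
    logb_ratio 2 ha hb hc hd]
  ring

lemma h002_eq_linear_logb (p a c : ℝ) (hb : b ∈ Set.Ioo 0 1) (hd : d ∈ Set.Ioo 0 1) :
    h002 p a b c d =
      (p - 1) * logb 2 b - p * logb 2 (1 - b) + (1 - p) * logb 2 d + p * logb 2 (1 - d) := by
  obtain ⟨hb₀, hb₁⟩ := pos_and_one_sub_pos hb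
  obtain ⟨hd₀, hd₁⟩ := pos_and_one_sub_pos hd
  simp (disch := positivity) only [h002, logb_mul, logb_div, logb_rpow_eq_mul_logb_of_pos]
  ring

lemma h011_eq_linear_logb (p : ℝ) (ha : a ∈ Set.Ioo 0 1) (hb : b ∈ Set.Ioo 0 1)
    (hc : c ∈ Set.Ioo 0 1) (hd : d ∈ Set.Ioo 0 1) :
    h011 p a b c d =
      (-2*p^3 + 6*p^2 - 6*p + 1) * logb 2 a + (2*p^3 - 4*p^2 + 2*p - 1) * logb 2 (1 - a) +
      (2*p^3 - 4*p^2 + 3*p - 1) * logb 2 b + (-2*p^3 + 2*p^2 - p) * logb 2 (1 - b) +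
      (2*p^3 - 4*p^2 + 2*p) * logb 2 c + (-2*p^3 + 2*p^2) * logb 2 (1 - c) +
      (-2*p^3 + 2*p^2 - p + 1) * logb 2 d + (2*p^3 + p) * logb 2 (1 - d) := by
  obtain ⟨ha₀, ha₁⟩ := pos_and_one_sub_pos ha
  obtain ⟨hb₀, hb₁⟩ := pos_and_one_sub_pos hb
  obtain ⟨hc₀, hc₁⟩ := pos_and_one_sub_pos hc
  obtain ⟨hd₀, hd₁⟩ := pos_and_one_sub_pos hd
  have hr := ratio_pos ha hb hc hd
  simp (disch := positivity) only [h011, logb_mul, logb_div, logb_rpow_eq_mul_logb_of_pos,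
    logb_ratio 2 ha hb hc hd]
  ring

lemma h012_eq_linear_logb (p : ℝ) (ha : a ∈ Set.Ioo 0 1) (hb : b ∈ Set.Ioo 0 1)
    (hc : c ∈ Set.Ioo 0 1) (hd : d ∈ Set.Ioo 0 1) :
    h012 p a b c d =
      (-2*p^3 + 5*p^2 - 4*p + 1) * logb 2 a + (2*p^3 - 3*p^2 + p) * logb 2 (1 - a) +
      (2*p^3 - 3*p^2) * logb 2 b + (-2*p^3 + p^2 + p - 1) * logb 2 (1 - b) +
      (2*p^3 - 3*p^2 + p) * logb 2 c + (-2*p^3 + p^2) * logb 2 (1 - c) +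
      (-2*p^3 + p^2 + p) * logb 2 d + (2*p^3 + p^2) * logb 2 (1 - d) := by
  obtain ⟨ha₀, ha₁⟩ := pos_and_one_sub_pos ha
  obtain ⟨hb₀, hb₁⟩ := pos_and_one_sub_pos hb
  obtain ⟨hc₀, hc₁⟩ := pos_and_one_sub_pos hc
  obtain ⟨hd₀, hd₁⟩ := pos_and_one_sub_pos hd
  have hr := ratio_pos ha hb hc hd
  simp (disch := positivity) only [h012, logb_mul, logb_div, logb_rpow_eq_mul_logb_of_pos,
    logb_ratio 2 ha hb hc hd]
  ring

/-- The right-hand side of the first constraint, so that `cons1` reads `1 ≤ cons1Rhs`. -/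
def cons1Rhs (p a b c d : ℝ) : ℝ :=
  (a ^ (4*p^3 - 12*p^2 + 11*p - 3) * ((1 - b) * d) ^ (4*p^3 - 6*p^2 + 2*p) *
      (1 - c) ^ (4*p^3 - 4*p^2 + p)) /
    (((1 - a) * c) ^ (4*p^3 - 8*p^2 + 5*p - 1) * b ^ (4*p^3 - 10*p^2 + 6*p - 1) *
      (1 - d) ^ (4*p^3 - 2*p^2))

lemma cons1Rhs_pos (p : ℝ) (ha : a ∈ Set.Ioo 0 1) (hb : b ∈ Set.Ioo 0 1)
    (hc : c ∈ Set.Ioo 0 1) (hd : d ∈ Set.Ioo 0 1) : 0 < cons1Rhs p a b c d := by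
  obtain ⟨ha₀, ha₁⟩ := pos_and_one_sub_pos ha
  obtain ⟨hb₀, hb₁⟩ := pos_and_one_sub_pos hb
  obtain ⟨hc₀, hc₁⟩ := pos_and_one_sub_pos hc
  obtain ⟨hd₀, hd₁⟩ := pos_and_one_sub_pos hd
  unfold cons1Rhs
  positivity

lemma logb_cons1Rhs (β p : ℝ) (ha : a ∈ Set.Ioo 0 1) (hb : b ∈ Set.Ioo 0 1)
    (hc : c ∈ Set.Ioo 0 1) (hd : d ∈ Set.Ioo 0 1) :
    logb β (cons1Rhs p a b c d) =
      (4*p^3 - 12*p^2 + 11*p - 3) * logb β a +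
      (4*p^3 - 6*p^2 + 2*p) * (logb β (1 - b) + logb β d) +
      (4*p^3 - 4*p^2 + p) * logb β (1 - c) -
      ((4*p^3 - 8*p^2 + 5*p - 1) * (logb β (1 - a) + logb β c) +
      (4*p^3 - 10*p^2 + 6*p - 1) * logb β b +
      (4*p^3 - 2*p^2) * logb β (1 - d)) := by
  obtain ⟨ha₀, ha₁⟩ := pos_and_one_sub_pos ha
  obtain ⟨hb₀, hb₁⟩ := pos_and_one_sub_pos hb
  obtain ⟨hc₀, hc₁⟩ := pos_and_one_sub_pos hc
  obtain ⟨hd₀, hd₁⟩ := pos_and_one_sub_pos hd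
  simp (disch := positivity) only [cons1Rhs, logb_mul, logb_div, logb_rpow_eq_mul_logb_of_pos]

lemma continuation_zero_sub_one_eq_logb_cons1Rhs (p : ℝ) (ha : a ∈ Set.Ioo 0 1)
    (hb : b ∈ Set.Ioo 0 1) (hc : c ∈ Set.Ioo 0 1) (hd : d ∈ Set.Ioo 0 1) :
    ((1 - p) * h001 p a b c d + p * h002 p a b c d) -
        ((1 - p) * h011 p a b c d + p * h012 p a b c d) =
      logb 2 (cons1Rhs p a b c d) := by
  rw [h001_eq_linear_logb p ha hb hc hd, h002_eq_linear_logb p a c hb hd,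
    h011_eq_linear_logb p ha hb hc hd, h012_eq_linear_logb p ha hb hc hd,
    logb_cons1Rhs 2 p ha hb hc hd]
  ring

theorem action_zero_dominates_general (p : ℝ) (ha : a ∈ Set.Ioo 0 1) (hb : b ∈ Set.Ioo 0 1)
    (hc : c ∈ Set.Ioo 0 1) (hd : d ∈ Set.Ioo 0 1) :
    (1 - p) * h011 p a b c d + p * h012 p a b c d ≤
        (1 - p) * h001 p a b c d + p * h002 p a b c d ↔
      cons1 p a b c d := by
  rw [← sub_nonneg, continuation_zero_sub_one_eq_logb_cons1Rhs p ha hb hc hd,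
    logb_nonneg_iff one_lt_two (cons1Rhs_pos p ha hb hc hd)]
  rfl

end

/-- under the two constraints, the action `x̃ = 0` attains the
maximum in the Bellman equation at MDP state `((0,0),1)`; equivalently,
`p̄·h((0,0),1) + p·h((0,0),2) ≥ p̄·h((0,1),1) + p·h((0,1),2)`. -/
theorem action_zero_dominates :
    ∀ p a b c d : ℝ, p ∈ Set.Ioo (0:ℝ) 1 → a ∈ Set.Ioo (0:ℝ) 1 →
      b ∈ Set.Ioo (0:ℝ) 1 → c ∈ Set.Ioo (0:ℝ) 1 → d ∈ Set.Ioo (0:ℝ) 1 →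
      cons1 p a b c d → cons2 p a b c d →
      (1 - p) * h011 p a b c d + p * h012 p a b c d ≤
        (1 - p) * h001 p a b c d + p * h002 p a b c d := by
  intro p a b c d _ ha hb hc hd h _
  exact (action_zero_dominates_general p ha hb hc hd).2 h

end BSCDelayed
end
end

section
/- Let X, Y, S be finite nonempty types, let n ≥ d ≥ 2 be integers, let μ₀ be a probability mass function on S, let W be a channel kernel assigning to each (x,σ) ∈ X × S a probability mass function W(·,·|x,σ) on S × Y, and for each t ∈ {1,…,n} let e_t be an encoder kernel assigning to each history (x^{t−1}, y^{t−d}) a probability mass function e_t(·|x^{t−1},y^{t−d}) on X (with y^{t−d} the empty history when t ≤ d). Let μ be the probability mass function on Xⁿ × Yⁿ × S^{n+1} given by μ(x^n, y^n, s_0^n) = μ₀(s_0)·Π_{t=1}^{n} e_t(x_t|x^{t−1},y^{t−d})·W(s_t, y_t|x_t, s_{t−1}). Then for every t with d ≤ t ≤ n: (i) for all (x^t, y^{t−d+1}, s^{t−d+1}) such that the event {X^t = x^t, Y^{t−d+1} = y^{t−d+1}, S^{t−d} = s^{t−d}} has positive μ-probability, the conditional probability μ(S_{t−d+1} = s_{t−d+1}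 | X^t = x^t, Y^{t−d+1} = y^{t−d+1}, S^{t−d} = s^{t−d}) equals W(s_{t−d+1}, y_{t−d+1} | x_{t−d+1}, s_{t−d}) / Σ_{σ'∈S} W(σ', y_{t−d+1} | x_{t−d+1}, s_{t−d}); and (ii) for all (x^t, y^{t−d}, s^{t−d}) such that the event {X^t = x^t, Y^{t−d} = y^{t−d}, S^{t−d} = s^{t−d}} has positive μ-probability, μ(Y_{t−d+1} = y | X^t = x^t, Y^{t−d} = y^{t−d}, S^{t−d} = s^{t−d}) = Σ_{σ'∈S} W(σ', y | x_{t−d+1}, s_{t−d}) for every y ∈ Y. Consequently, the transformed process with state S̃_{t−1} = (S_{t−d}, X_{t−d+1}^{t−1}), output Ỹ_t = Y_{t−d+1}, and input X̃_t = X_t satisfies the finite-state-channel Markov property: its new state and output at time t depend on the past only through (S̃_{t−1}, X̃_t), via a time-invariant kernel. -/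
open Finset

/-!
Everything follows from a closed formula for the mass of the cylinder that fixes the first `t`
inputs, the first `a` outputs and the states at times `0, …, a`: if `d ≥ 1` and `a ≤ t ≤ a + d`,
it is `μ₀(s₀) · ∏_{i<t} e_i · ∏_{i<a} W_i`. One integrates out the free coordinates from the last
one backwards: an input when `a = t`, because the encoder kernels sum to one, and a pair (output,
state) when `a < t`, because the channel kernels sum to one. The delay enters in the second case:
the first `t` encoder kernels only see outputs up to time `t - d ≤ a`, so they are constant in the
output that is summed.

Revealing the output and the state at time `k + 1` therefore multiplies the mass of a cylinder by
`W(s_{k+1}, y_{k+1} | x_{k+1}, s_k)`, and everything else cancels in the conditional probabilities.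
-/

section PrefixCylinder

variable {A : Type*} {N : ℕ}

lemma prod_val_lt_succ {M : Type*} [CommMonoid M] (f : Fin N → M) (i : Fin N) :
    ∏ j : Fin N with j.val < i.val + 1, f j = (∏ j : Fin N with j.val < i.val, f j) * f i := by
  have hinsert : ({j | j.val < i.val + 1} : Finset (Fin N)) =
      insert i ({j | j.val < i.val} : Finset (Fin N)) := by
    ext j
    simp only [mem_filter, mem_univ, true_and, mem_insert, Fin.ext_iff]
    omega
  rw [hinsert, prod_insert (by simp), mul_comm]

variable [Fintype A] [DecidableEq A]

/-- The cylinder of sequences that agree with `f` in the first `a` coordinates. -/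
def prefixCylinder (a : ℕ) (f : Fin N → A) : Finset (Fin N → A) :=
  {g | ∀ i : Fin N, i.val < a → g i = f i}

lemma mem_prefixCylinder {a : ℕ} {f g : Fin N → A} :
    g ∈ prefixCylinder a f ↔ ∀ i : Fin N, i.val < a → g i = f i := by
  simp [prefixCylinder]

lemma prefixCylinder_length (f : Fin N → A) : prefixCylinder N f = {f} := by
  ext g
  simp [mem_prefixCylinder, funext_iff]

lemma prefixCylinder_succ_update (f : Fin N → A) (i : Fin N) (v : A) :
    prefixCylinder (i + 1) (Function.update f i v) = {g ∈ prefixCylinder i f | g i = v} := by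
  ext g
  simp only [mem_filter, mem_prefixCylinder, Nat.lt_succ_iff_lt_or_eq, or_imp, forall_and]
  refine and_congr (forall₂_congr fun j hj => ?_) ?_
  · rw [Function.update_of_ne (Fin.ne_of_lt hj)]
  · simp [← Fin.ext_iff]

lemma sum_prefixCylinder_eq_sum_update {M : Type*} [AddCommMonoid M] (F : (Fin N → A) → M)
    (f : Fin N → A) (i : Fin N) :
    ∑ g ∈ prefixCylinder i f, F g =
      ∑ v, ∑ g ∈ prefixCylinder (i + 1) (Function.update f i v), F g := by
  simp only [prefixCylinder_succ_update]
  exact (sum_fiberwise _ (fun g => g i) F).symm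

end PrefixCylinder

section CylinderMass

variable {X Y S K : Type*} [Fintype X] [Fintype Y] [Fintype S]
  [DecidableEq X] [DecidableEq Y] [DecidableEq S] [AddCommMonoid K] {n : ℕ}
  (μ : (Fin n → X) → (Fin n → Y) → (Fin (n + 1) → S) → K)

/-- The `μ`-mass of the event that the first `t` inputs, the first `a` outputs and the states at
times `0, …, b` are those of `(xs, ys, ss)`. Since states start at time `0`, there are `b + 1` of
them. -/
def cylinderMass (t a b : ℕ) (xs : Fin n → X) (ys : Fin n → Y) (ss : Fin (n + 1) → S) : K :=
  ∑ xs' ∈ prefixCylinder t xs, ∑ ys' ∈ prefixCylinder a ys, ∑ ss' ∈ prefixCylinder (b + 1) ss,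
    μ xs' ys' ss'

lemma sum_ite_agree_eq_cylinderMass (t a b : ℕ)
    (xs : Fin n → X) (ys : Fin n → Y) (ss : Fin (n + 1) → S) :
    (∑ xs' : Fin n → X, ∑ ys' : Fin n → Y, ∑ ss' : Fin (n + 1) → S,
      if (∀ i : Fin n, i.val < t → xs' i = xs i) ∧
          (∀ i : Fin n, i.val < a → ys' i = ys i) ∧
          (∀ i : Fin (n + 1), i.val ≤ b → ss' i = ss i)
        then μ xs' ys' ss' else 0) = cylinderMass μ t a b xs ys ss := by
  simp only [cylinderMass, prefixCylinder, sum_filter, Nat.lt_succ_iff, ite_and, sum_ite_irrel,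
    sum_const_zero]

lemma sum_ite_agree_output_eq_cylinderMass (t b : ℕ) (i : Fin n) (y : Y)
    (xs : Fin n → X) (ys : Fin n → Y) (ss : Fin (n + 1) → S) :
    (∑ xs' : Fin n → X, ∑ ys' : Fin n → Y, ∑ ss' : Fin (n + 1) → S,
      if (∀ j : Fin n, j.val < t → xs' j = xs j) ∧
          (∀ j : Fin n, j.val < i → ys' j = ys j) ∧
          ys' i = y ∧
          (∀ j : Fin (n + 1), j.val ≤ b → ss' j = ss j)
        then μ xs' ys' ss' else 0) =
      cylinderMass μ t (i + 1) b xs (Function.update ys i y) ss := by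
  simp only [cylinderMass, prefixCylinder_succ_update]
  simp only [prefixCylinder, sum_filter, Nat.lt_succ_iff, ite_and, sum_ite_irrel, sum_const_zero]

variable (xs : Fin n → X) (ys : Fin n → Y) (ss : Fin (n + 1) → S)

lemma cylinderMass_eq_sum_input (a b : ℕ) (i : Fin n) :
    cylinderMass μ i a b xs ys ss =
      ∑ x, cylinderMass μ (i + 1) a b (Function.update xs i x) ys ss :=
  sum_prefixCylinder_eq_sum_update _ xs i

lemma cylinderMass_eq_sum_output (t b : ℕ) (i : Fin n) :
    cylinderMass μ t i b xs ys ss =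
      ∑ y, cylinderMass μ t (i + 1) b xs (Function.update ys i y) ss := by
  simp only [cylinderMass, sum_prefixCylinder_eq_sum_update _ ys i]
  exact sum_comm

lemma cylinderMass_eq_sum_state (t a : ℕ) (i : Fin n) :
    cylinderMass μ t a i xs ys ss =
      ∑ σ, cylinderMass μ t a (i + 1) xs ys (Function.update ss i.succ σ) := by
  have hsplit (F : (Fin (n + 1) → S) → K) := sum_prefixCylinder_eq_sum_update F ss i.succ
  simp only [Fin.val_succ] at hsplit
  simp only [cylinderMass, hsplit]
  exact (sum_congr rfl fun _ _ => sum_comm).trans sum_comm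

lemma cylinderMass_length : cylinderMass μ n n n xs ys ss = μ xs ys ss := by
  simp [cylinderMass, prefixCylinder_length]

end CylinderMass

section JointLaw

variable {X Y S K : Type*} {n : ℕ} (d : ℕ) (μ₀ : S → K) (W : Fin n → S → Y → X → S → K)
  (e : (t : Fin n) → (Fin t.val → X) → (Fin (t.val + 1 - d) → Y) → X → K)

/-- The kernel value `e_{i+1}(x | x^i, y^{i+1-d})` along the trajectory `(xs, ys)`. -/
def encoderWeight (i : Fin n) (xs : Fin n → X) (ys : Fin n → Y) (x : X) : K :=
  e i (fun j => xs ⟨j.val, j.isLt.trans i.isLt⟩) (fun j => ys ⟨j.val, by omega⟩) x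

lemma encoderWeight_congr {i : Fin n} {xs xs' : Fin n → X} {ys ys' : Fin n → Y}
    (hxs : ∀ j : Fin n, j.val < i → xs' j = xs j)
    (hys : ∀ j : Fin n, j.val < i + 1 - d → ys' j = ys j) (x : X) :
    encoderWeight d e i xs' ys' x = encoderWeight d e i xs ys x := by
  unfold encoderWeight
  congr 1
  · exact funext fun j => hxs _ j.isLt
  · exact funext fun j => hys _ j.isLt

variable [CommSemiring K]

/-- The joint law of inputs, outputs and states produced by the initial state law `μ₀`, the channel
kernels `W` and the encoder `e` with feedback delay `d`. The channel may vary with time. -/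
def jointLaw (xs : Fin n → X) (ys : Fin n → Y) (ss : Fin (n + 1) → S) : K :=
  μ₀ (ss 0) * ∏ i : Fin n,
    (encoderWeight d e i xs ys (xs i) * W i (ss i.succ) (ys i) (xs i) (ss i.castSucc))

/-- The part `μ₀(s₀) · ∏_{i<t} e_i · ∏_{i<a} W_i` of the product defining `jointLaw`. -/
def prefixWeight (t a : ℕ) (xs : Fin n → X) (ys : Fin n → Y) (ss : Fin (n + 1) → S) : K :=
  μ₀ (ss 0) * ((∏ i : Fin n with i.val < t, encoderWeight d e i xs ys (xs i)) *
    ∏ i : Fin n with i.val < a, W i (ss i.succ) (ys i) (xs i) (ss i.castSucc))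

lemma prefixWeight_length : prefixWeight d μ₀ W e n n = jointLaw d μ₀ W e := by
  ext xs ys ss
  simp [prefixWeight, jointLaw, prod_mul_distrib]

lemma prefixWeight_succ_input (a : ℕ) (i : Fin n)
    (xs : Fin n → X) (ys : Fin n → Y) (ss : Fin (n + 1) → S) :
    prefixWeight d μ₀ W e (i + 1) a xs ys ss =
      prefixWeight d μ₀ W e i a xs ys ss * encoderWeight d e i xs ys (xs i) := by
  simp only [prefixWeight, prod_val_lt_succ]
  ring

lemma prefixWeight_succ_output (t : ℕ) (i : Fin n)
    (xs : Fin n → X) (ys : Fin n → Y) (ss : Fin (n + 1) → S) :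
    prefixWeight d μ₀ W e t (i + 1) xs ys ss =
      prefixWeight d μ₀ W e t i xs ys ss * W i (ss i.succ) (ys i) (xs i) (ss i.castSucc) := by
  simp only [prefixWeight, prod_val_lt_succ]
  ring

lemma prefixWeight_congr {t a : ℕ} (hat : a ≤ t) (hta : t ≤ a + d)
    {xs xs' : Fin n → X} {ys ys' : Fin n → Y} {ss ss' : Fin (n + 1) → S}
    (hxs : ∀ i : Fin n, i.val < t → xs' i = xs i)
    (hys : ∀ i : Fin n, i.val < a → ys' i = ys i)
    (hss : ∀ i : Fin (n + 1), i.val < a + 1 → ss' i = ss i) :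
    prefixWeight d μ₀ W e t a xs' ys' ss' = prefixWeight d μ₀ W e t a xs ys ss := by
  unfold prefixWeight
  congr 1
  · rw [hss 0 (by simp)]
  congr 1
  · refine prod_congr rfl fun i hi => ?_
    have hit : i.val < t := (mem_filter.1 hi).2
    rw [hxs i hit, encoderWeight_congr d e (fun j hj => hxs j (by omega))
      (fun j hj => hys j (by omega))]
  · refine prod_congr rfl fun i hi => ?_
    have hia : i.val < a := (mem_filter.1 hi).2
    rw [hxs i (by omega), hys i hia, hss i.succ (by simpa),
      hss i.castSucc (by rw [Fin.val_castSucc]; omega)]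

lemma prefixWeight_succ_update_input (i : Fin n)
    (xs : Fin n → X) (ys : Fin n → Y) (ss : Fin (n + 1) → S) (x : X) :
    prefixWeight d μ₀ W e (i + 1) i (Function.update xs i x) ys ss =
      prefixWeight d μ₀ W e i i xs ys ss * encoderWeight d e i xs ys x := by
  have hxs (j : Fin n) (hj : j < i) : Function.update xs i x j = xs j :=
    Function.update_of_ne hj.ne _ _
  rw [prefixWeight_succ_input, Function.update_self,
    prefixWeight_congr d μ₀ W e le_rfl (by omega) hxs (fun _ _ => rfl) (fun _ _ => rfl),
    encoderWeight_congr d e hxs (fun _ _ => rfl)]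

lemma prefixWeight_succ_update_output_state {t : ℕ} {i : Fin n} (hit : i < t) (hti : t ≤ i + d)
    (xs : Fin n → X) (ys : Fin n → Y) (ss : Fin (n + 1) → S) (y : Y) (σ : S) :
    prefixWeight d μ₀ W e t (i + 1) xs (Function.update ys i y) (Function.update ss i.succ σ) =
      prefixWeight d μ₀ W e t i xs ys ss * W i σ y (xs i) (ss i.castSucc) := by
  have hys (j : Fin n) (hj : j < i) : Function.update ys i y j = ys j :=
    Function.update_of_ne hj.ne _ _
  have hss (j : Fin (n + 1)) (hj : j < i.succ) : Function.update ss i.succ σ j = ss j :=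
    Function.update_of_ne hj.ne _ _
  rw [prefixWeight_succ_output, Function.update_self, Function.update_self,
    hss i.castSucc i.castSucc_lt_succ,
    prefixWeight_congr d μ₀ W e hit.le hti (fun _ _ => rfl) hys hss]

end JointLaw

section Marginalization

variable {X Y S K : Type*} [Fintype X] [Fintype Y] [Fintype S]
  [DecidableEq X] [DecidableEq Y] [DecidableEq S] [CommSemiring K] {n d : ℕ} (μ₀ : S → K)
  {W : Fin n → S → Y → X → S → K}
  {e : (t : Fin n) → (Fin t.val → X) → (Fin (t.val + 1 - d) → Y) → X → K}

lemma cylinderMass_eq_prefixWeight_of_succ_input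
    (hesum : ∀ t hx hy, ∑ x : X, e t hx hy x = 1)
    (μ : (Fin n → X) → (Fin n → Y) → (Fin (n + 1) → S) → K) (i : Fin n)
    (h : cylinderMass μ (i + 1) i i = prefixWeight d μ₀ W e (i + 1) i) :
    cylinderMass μ i i i = prefixWeight d μ₀ W e i i := by
  ext xs ys ss
  simp only [cylinderMass_eq_sum_input, h, prefixWeight_succ_update_input d μ₀ W e, ← mul_sum,
    encoderWeight, hesum, mul_one]

lemma cylinderMass_eq_prefixWeight_of_succ_output
    (hWsum : ∀ i x σ, ∑ σ' : S, ∑ y : Y, W i σ' y x σ = 1)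
    (μ : (Fin n → X) → (Fin n → Y) → (Fin (n + 1) → S) → K)
    {t : ℕ} {i : Fin n} (hit : i < t) (hti : t ≤ i + d)
    (h : cylinderMass μ t (i + 1) (i + 1) = prefixWeight d μ₀ W e t (i + 1)) :
    cylinderMass μ t i i = prefixWeight d μ₀ W e t i := by
  ext xs ys ss
  rw [cylinderMass_eq_sum_state]
  simp only [cylinderMass_eq_sum_output, h,
    prefixWeight_succ_update_output_state d μ₀ W e hit hti, ← mul_sum, hWsum, mul_one]

lemma cylinderMass_jointLaw_self
    (hWsum : ∀ i x σ, ∑ σ' : S, ∑ y : Y, W i σ' y x σ = 1)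
    (hesum : ∀ t hx hy, ∑ x : X, e t hx hy x = 1) (hd : 1 ≤ d) {a : ℕ} (ha : a ≤ n) :
    cylinderMass (jointLaw d μ₀ W e) a a a = prefixWeight d μ₀ W e a a := by
  induction ha using Nat.decreasingInduction with
  | self =>
    rw [prefixWeight_length]
    ext xs ys ss
    exact cylinderMass_length _ xs ys ss
  | of_succ a ha ih =>
    let i : Fin n := ⟨a, ha⟩
    have hinput : cylinderMass (jointLaw d μ₀ W e) (a + 1) a a =
        prefixWeight d μ₀ W e (a + 1) a :=
      cylinderMass_eq_prefixWeight_of_succ_output (i := i) μ₀ hWsum _ a.lt_succ_self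
        (Nat.add_le_add_left hd a) ih
    exact cylinderMass_eq_prefixWeight_of_succ_input μ₀ hesum _ i hinput

lemma cylinderMass_jointLaw
    (hWsum : ∀ i x σ, ∑ σ' : S, ∑ y : Y, W i σ' y x σ = 1)
    (hesum : ∀ t hx hy, ∑ x : X, e t hx hy x = 1) (hd : 1 ≤ d)
    {t a : ℕ} (hat : a ≤ t) (hta : t ≤ a + d) (htn : t ≤ n) :
    cylinderMass (jointLaw d μ₀ W e) t a a = prefixWeight d μ₀ W e t a := by
  induction hat using Nat.decreasingInduction with
  | self => exact cylinderMass_jointLaw_self μ₀ hWsum hesum hd htn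
  | of_succ a ha ih =>
    exact cylinderMass_eq_prefixWeight_of_succ_output (i := ⟨a, ha.trans_le htn⟩) μ₀ hWsum _ ha hta
      (ih (by omega))

lemma cylinderMass_jointLaw_succ_output
    (hWsum : ∀ i x σ, ∑ σ' : S, ∑ y : Y, W i σ' y x σ = 1)
    (hesum : ∀ t hx hy, ∑ x : X, e t hx hy x = 1)
    {t : ℕ} {i : Fin n} (hit : i < t) (hti : t ≤ i + d) (htn : t ≤ n)
    (xs : Fin n → X) (ys : Fin n → Y) (ss : Fin (n + 1) → S) (y : Y) :
    cylinderMass (jointLaw d μ₀ W e) t (i + 1) i xs (Function.update ys i y) ss =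
      prefixWeight d μ₀ W e t i xs ys ss * ∑ σ, W i σ y (xs i) (ss i.castSucc) := by
  rw [cylinderMass_eq_sum_state,
    cylinderMass_jointLaw μ₀ hWsum hesum (by omega) hit (by omega) htn]
  simp only [prefixWeight_succ_update_output_state d μ₀ W e hit hti, mul_sum]

end Marginalization

theorem transformed_channel_markov_property_general
    {X Y S K : Type*} [Fintype X] [Fintype Y] [Fintype S]
    [DecidableEq X] [DecidableEq Y] [DecidableEq S] [Semifield K] {n d : ℕ}
    (μ₀ : S → K) {W : Fin n → S → Y → X → S → K}
    (hWsum : ∀ i x σ, ∑ σ' : S, ∑ y : Y, W i σ' y x σ = 1)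
    {e : (t : Fin n) → (Fin t.val → X) → (Fin (t.val + 1 - d) → Y) → X → K}
    (hesum : ∀ t hx hy, ∑ x : X, e t hx hy x = 1)
    {t : ℕ} {k : Fin n} (hkt : k < t) (htk : t ≤ k + d) (htn : t ≤ n)
    (xs : Fin n → X) (ys : Fin n → Y) (ss : Fin (n + 1) → S) :
    (cylinderMass (jointLaw d μ₀ W e) t (k + 1) k xs ys ss ≠ 0 →
      cylinderMass (jointLaw d μ₀ W e) t (k + 1) (k + 1) xs ys ss /
          cylinderMass (jointLaw d μ₀ W e) t (k + 1) k xs ys ss =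
        W k (ss k.succ) (ys k) (xs k) (ss k.castSucc) /
          ∑ σ', W k σ' (ys k) (xs k) (ss k.castSucc)) ∧
    (cylinderMass (jointLaw d μ₀ W e) t k k xs ys ss ≠ 0 → ∀ y : Y,
      cylinderMass (jointLaw d μ₀ W e) t (k + 1) k xs (Function.update ys k y) ss /
          cylinderMass (jointLaw d μ₀ W e) t k k xs ys ss =
        ∑ σ', W k σ' y (xs k) (ss k.castSucc)) := by
  have hd : 1 ≤ d := by omega
  have hpast := cylinderMass_jointLaw μ₀ hWsum hesum hd hkt.le htk htn
  have houtput := cylinderMass_jointLaw_succ_output μ₀ hWsum hesum hkt htk htn xs ys ss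
  have hstate := cylinderMass_jointLaw μ₀ hWsum hesum hd hkt (by omega) htn
  refine ⟨fun hne => ?_, fun hne y => ?_⟩
  · have houtput_self := houtput (ys k)
    rw [Function.update_eq_self] at houtput_self
    rw [houtput_self] at hne ⊢
    rw [hstate, prefixWeight_succ_output, mul_div_mul_left _ _ (left_ne_zero_of_mul hne)]
  · rw [hpast] at hne ⊢
    rw [houtput y, mul_div_cancel_left₀ _ hne]

/-- for a finite-state channel used with a delayed-feedback
encoder (delay `d`), the joint law `μ` of inputs, outputs and states satisfies,
for every time `t` with `d ≤ t ≤ n`: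

(i) conditioned on `(X^t, Y^{t−d+1}, S^{t−d})` (an event of positive
probability), the state `S_{t−d+1}` has conditional law
`W(s_{t−d+1}, y_{t−d+1} | x_{t−d+1}, s_{t−d}) / Σ_{σ'} W(σ', y_{t−d+1} |
x_{t−d+1}, s_{t−d})`;

(ii) conditioned on `(X^t, Y^{t−d}, S^{t−d})` (an event of positive
probability), the output `Y_{t−d+1}` has conditional law
`y ↦ Σ_{σ'} W(σ', y | x_{t−d+1}, s_{t−d})`.

Consequently the transformed process with state `S̃_{t−1} = (S_{t−d},
X_{t−d+1}^{t−1})`, output `Ỹ_t = Y_{t−d+1}` and input `X̃_t = X_t` satisfies the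
finite-state-channel Markov property.

Indexing convention: `xs i` and `ys i` (for `i : Fin n`) are the input and the
output at time `i+1`, and `ss i` (for `i : Fin (n+1)`) is the state at time
`i`.  `W σ' yv xv σ = P(S⁺ = σ', Y = yv | X = xv, S = σ)` and
`e t hx hy xv` is the probability that the encoder emits `xv` at time `t+1`
given the input history `hx` and the delayed output history `hy`. -/
theorem transformed_channel_markov_property
    {X Y S : Type*} [Fintype X] [Fintype Y] [Fintype S]
    [DecidableEq X] [DecidableEq Y] [DecidableEq S]
    [Nonempty X] [Nonempty Y] [Nonempty S]
    (n d : ℕ) (hd : 2 ≤ d) (hdn : d ≤ n)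
    (μ₀ : S → ℝ) (hμ₀ : ∀ σ : S, 0 ≤ μ₀ σ) (hμ₀sum : ∑ σ : S, μ₀ σ = 1)
    (W : S → Y → X → S → ℝ)
    (hW : ∀ (σ' : S) (yv : Y) (xv : X) (σ : S), 0 ≤ W σ' yv xv σ)
    (hWsum : ∀ (xv : X) (σ : S), ∑ σ' : S, ∑ yv : Y, W σ' yv xv σ = 1)
    (e : (t : Fin n) → (Fin t.val → X) → (Fin (t.val + 1 - d) → Y) → X → ℝ)
    (he : ∀ t hx hy xv, 0 ≤ e t hx hy xv)
    (hesum : ∀ t hx hy, ∑ xv : X, e t hx hy xv = 1)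
    (μ : (Fin n → X) → (Fin n → Y) → (Fin (n + 1) → S) → ℝ)
    (hμ : ∀ xs ys ss, μ xs ys ss = μ₀ (ss 0) *
      ∏ t : Fin n,
        (e t (fun i => xs ⟨i.val, i.isLt.trans t.isLt⟩)
            (fun j => ys ⟨j.val, by have h1 := j.isLt; have h2 := t.isLt; omega⟩)
            (xs t) *
          W (ss t.succ) (ys t) (xs t) (ss t.castSucc))) :
    ∀ (t : ℕ) (ht1 : d ≤ t) (ht2 : t ≤ n),
      ∀ (xs : Fin n → X) (ys : Fin n → Y) (ss : Fin (n + 1) → S),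
        -- (i) conditional law of S_{t−d+1}
        ((0 < ∑ xs' : Fin n → X, ∑ ys' : Fin n → Y, ∑ ss' : Fin (n + 1) → S,
            (if (∀ i : Fin n, i.val < t → xs' i = xs i) ∧
                (∀ i : Fin n, i.val < t - d + 1 → ys' i = ys i) ∧
                (∀ i : Fin (n + 1), i.val ≤ t - d → ss' i = ss i)
              then μ xs' ys' ss' else 0) →
          (∑ xs' : Fin n → X, ∑ ys' : Fin n → Y, ∑ ss' : Fin (n + 1) → S,
            (if (∀ i : Fin n, i.val < t → xs' i = xs i) ∧
                (∀ i : Fin n, i.val < t - d + 1 → ys' i = ys i) ∧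
                (∀ i : Fin (n + 1), i.val ≤ t - d + 1 → ss' i = ss i)
              then μ xs' ys' ss' else 0)) /
          (∑ xs' : Fin n → X, ∑ ys' : Fin n → Y, ∑ ss' : Fin (n + 1) → S,
            (if (∀ i : Fin n, i.val < t → xs' i = xs i) ∧
                (∀ i : Fin n, i.val < t - d + 1 → ys' i = ys i) ∧
                (∀ i : Fin (n + 1), i.val ≤ t - d → ss' i = ss i)
              then μ xs' ys' ss' else 0)) =
          W (ss ⟨t - d + 1, by omega⟩) (ys ⟨t - d, by omega⟩)
              (xs ⟨t - d, by omega⟩) (ss ⟨t - d, by omega⟩) /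
            ∑ σ' : S, W σ' (ys ⟨t - d, by omega⟩)
              (xs ⟨t - d, by omega⟩) (ss ⟨t - d, by omega⟩)) ∧
        -- (ii) conditional law of Y_{t−d+1}
        (0 < ∑ xs' : Fin n → X, ∑ ys' : Fin n → Y, ∑ ss' : Fin (n + 1) → S,
            (if (∀ i : Fin n, i.val < t → xs' i = xs i) ∧
                (∀ i : Fin n, i.val < t - d → ys' i = ys i) ∧
                (∀ i : Fin (n + 1), i.val ≤ t - d → ss' i = ss i)
              then μ xs' ys' ss' else 0) →
          ∀ yv : Y,
            (∑ xs' : Fin n → X, ∑ ys' : Fin n → Y, ∑ ss' : Fin (n + 1) → S,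
              (if (∀ i : Fin n, i.val < t → xs' i = xs i) ∧
                  (∀ i : Fin n, i.val < t - d → ys' i = ys i) ∧
                  ys' ⟨t - d, by omega⟩ = yv ∧
                  (∀ i : Fin (n + 1), i.val ≤ t - d → ss' i = ss i)
                then μ xs' ys' ss' else 0)) /
            (∑ xs' : Fin n → X, ∑ ys' : Fin n → Y, ∑ ss' : Fin (n + 1) → S,
              (if (∀ i : Fin n, i.val < t → xs' i = xs i) ∧
                  (∀ i : Fin n, i.val < t - d → ys' i = ys i) ∧
                  (∀ i : Fin (n + 1), i.val ≤ t - d → ss' i = ss i)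
                then μ xs' ys' ss' else 0)) =
            ∑ σ' : S, W σ' yv (xs ⟨t - d, by omega⟩) (ss ⟨t - d, by omega⟩))) := by
  obtain rfl : μ = jointLaw d μ₀ (fun _ => W) e := funext₃ hμ
  intro t ht1 ht2 xs ys ss
  let k : Fin n := ⟨t - d, by omega⟩
  obtain ⟨hstate, houtput⟩ := transformed_channel_markov_property_general (k := k) μ₀
    (fun _ => hWsum) hesum (show t - d < t by omega) (show t ≤ t - d + d by omega) ht2 xs ys ss
  simp only [← sum_ite_agree_output_eq_cylinderMass] at houtput
  simp only [sum_ite_agree_eq_cylinderMass]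
  exact ⟨fun hpos => hstate hpos.ne', fun hpos => houtput hpos.ne'⟩
end
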